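/- Let n be odd and let G = 𝒞_n·J_n. If G ∈ G is not diagonal and X, Y ∈ G are diagonal elements with det X = det Y, then the matrix (X − Y)·G is nilpotent. -/

import Mathlib

open Matrix BigOperators
open scoped Classical

noncomputable section

abbrev Mat (n : ℕ) := Matrix (Fin n) (Fin n) ℂ

/-- A set of matrices is irreducible if the only invariant subspaces are `⊥` and `⊤`. -/
def IrreducibleSet {n : ℕ} (S : Set (Mat n)) : Prop :=
  ∀ W : Submodule ℂ (Fin n → ℂ),
    (∀ A ∈ S, ∀ v ∈ W, A.mulVec v ∈ W) → W = ⊥ ∨ W = ⊤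

/-- All complex eigenvalues are real. -/
def RealSpectrum {n : ℕ} (M : Mat n) : Prop :=
  ∀ z ∈ spectrum ℂ M, z.im = 0

/-- A set of matrices forming a group of invertible matrices under multiplication. -/
def IsMatGroup {n : ℕ} (G : Set (Mat n)) : Prop :=
  (1 : Mat n) ∈ G ∧ (∀ A ∈ G, ∀ B ∈ G, A * B ∈ G) ∧
    ∀ A ∈ G, IsUnit A ∧ A⁻¹ ∈ G

/-- Monomial matrix: exactly one nonzero entry in each row and each column. -/
def IsMonomialMat {n : ℕ} (M : Mat n) : Prop :=
  (∀ i, ∃! j, M i j ≠ 0) ∧ ∀ j, ∃! i, M i j ≠ 0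

/-- Pattern of a matrix: nonzero entries replaced by 1. -/
def patMat {n : ℕ} (M : Mat n) : Mat n :=
  Matrix.of fun i j => if M i j = 0 then 0 else 1

/-- Signed permutation matrix. -/
def IsSignedPermMat {n : ℕ} (M : Mat n) : Prop :=
  IsMonomialMat M ∧ ∀ i j, M i j = 0 ∨ M i j = 1 ∨ M i j = -1

/-- Permutation matrix associated to `σ` (sending `e j` to `e (σ j)`). -/
def permMat {n : ℕ} (σ : Equiv.Perm (Fin n)) : Mat n :=
  Matrix.of fun i j => if i = σ j then 1 else 0

def IsPermMat {n : ℕ} (M : Mat n) : Prop := ∃ σ : Equiv.Perm (Fin n), M = permMat σ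

/-- The cyclic permutation matrix `C_n`, sending `e i` to `e (i+1 mod n)`. -/
def cycMat (n : ℕ) : Mat n :=
  Matrix.of fun i j => if (i : ℕ) = ((j : ℕ) + 1) % n then 1 else 0

/-- The cyclic group `𝒞_n` generated by `C_n`. -/
def cycSet (n : ℕ) : Set (Mat n) := {M | ∃ k : ℕ, M = cycMat n ^ k}

/-- Signed diagonal matrix: member of `D_n(±1)`. -/
def IsSignedDiag {n : ℕ} (M : Mat n) : Prop :=
  ∃ d : Fin n → ℂ, (∀ i, d i = 1 ∨ d i = -1) ∧ M = Matrix.diagonal d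

/-- `avg_G(D) = D · D^G · … · D^(G^(m-1))` where `m = orderOf G` and `D^G = G⁻¹ D G`. -/
def avgMat {n : ℕ} (G D : Mat n) : Mat n :=
  ((List.range (orderOf G)).map fun k => (G ^ k)⁻¹ * D * G ^ k).prod

/-- `J_K = {J ∈ D_n(±1) : avg_G(J) = det(J)·I for all G ∈ K \ {I}}`. -/
def Jset {n : ℕ} (K : Set (Mat n)) : Set (Mat n) :=
  {J | IsSignedDiag J ∧ ∀ G ∈ K, G ≠ 1 → avgMat G J = J.det • (1 : Mat n)}

/-- `J_K^+ = {J ∈ J_K : det J = 1}`. -/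
def JsetPlus {n : ℕ} (K : Set (Mat n)) : Set (Mat n) :=
  {J | J ∈ Jset K ∧ J.det = 1}

/-- Realizable: simultaneously similar to a set of real-entried matrices. -/
def Realizable {n : ℕ} (S : Set (Mat n)) : Prop :=
  ∃ T : Mat n, IsUnit T ∧ ∀ A ∈ S, ∀ i j, ((T⁻¹ * A * T) i j).im = 0

/-- Indecomposable: no common invariant standard subspace except `0` and `ℂ^n`. -/
def IndecomposableSet {n : ℕ} (S : Set (Mat n)) : Prop :=
  ∀ I : Set (Fin n),
    (∀ A ∈ S, ∀ j ∈ I, ∀ i, A i j ≠ 0 → i ∈ I) → I = ∅ ∨ I = Set.univ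

/-- Kronecker product, identified with a matrix over `Fin (m*n)` canonically
(first factor's index is the block index). -/
def kron {m n : ℕ} (A : Mat m) (B : Mat n) : Mat (m * n) :=
  Matrix.reindex finProdFinEquiv finProdFinEquiv (Matrix.kroneckerMap (· * ·) A B)

end

theorem pm_mul {n : ℕ} (σ τ : Equiv.Perm (Fin n)) :
    permMat σ * permMat τ = permMat (σ * τ) := by
  ext i j
  simp [permMat, Matrix.mul_apply]
  congr

theorem pm_one {n : ℕ} : permMat (1 : Equiv.Perm (Fin n)) = 1 := by
  ext i j
  simp [permMat, Matrix.one_apply]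
  congr

theorem pm_pow {n : ℕ} (σ : Equiv.Perm (Fin n)) (k : ℕ) :
    permMat σ ^ k = permMat (σ ^ k) := by
  induction k with
  | zero => simp [pm_one]
  | succ k ih => rw [pow_succ, ih, pm_mul, pow_succ]

theorem pm_inv {n : ℕ} (σ : Equiv.Perm (Fin n)) :
    (permMat σ)⁻¹ = permMat σ⁻¹ := by
  apply Matrix.inv_eq_left_inv
  rw [pm_mul]; simp [pm_one]

theorem diag_pm {n : ℕ} (σ : Equiv.Perm (Fin n)) (d : Fin n → ℂ) :
    Matrix.diagonal d * permMat σ = permMat σ * Matrix.diagonal (fun j => d (σ j)) := by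
  ext i j
  rw [Matrix.diagonal_mul, Matrix.mul_diagonal]
  by_cases h : i = σ j <;> simp [permMat, h]

theorem pm_diag_pow {n : ℕ} (σ : Equiv.Perm (Fin n)) (c : Fin n → ℂ) (m : ℕ) :
    (permMat σ * Matrix.diagonal c) ^ m =
      permMat (σ ^ m) * Matrix.diagonal (fun j => ∏ k ∈ Finset.range m, c ((σ ^ k) j)) := by
  induction m with
  | zero => simp [pm_one]
  | succ m ih =>
    rw [pow_succ', ih, mul_assoc, ← mul_assoc (Matrix.diagonal c), diag_pm, mul_assoc,
      ← mul_assoc, pm_mul, Matrix.diagonal_mul_diagonal, pow_succ']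
    congr 2
    funext j
    rw [Finset.prod_range_succ, mul_comm]

theorem avg_pm {n : ℕ} (σ : Equiv.Perm (Fin n)) (d : Fin n → ℂ) :
    avgMat (permMat σ) (Matrix.diagonal d) = Matrix.diagonal
      (fun j => ∏ k ∈ Finset.range (orderOf (permMat σ)), d ((σ ^ k) j)) := by
  unfold avgMat
  generalize orderOf (permMat σ) = m
  have h : ∀ k : ℕ, (permMat σ ^ k)⁻¹ * Matrix.diagonal d * permMat σ ^ k =
      Matrix.diagonal (fun j => d ((σ ^ k) j)) := by
    intro k
    rw [pm_pow, mul_assoc, diag_pm, ← mul_assoc, pm_inv, pm_mul]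
    simp [pm_one]
  simp only [h]
  induction m with
  | zero => simp
  | succ m ih =>
    rw [List.range_succ, List.map_append, List.prod_append, ih]
    simp [Matrix.diagonal_mul_diagonal, Finset.prod_range_succ]

theorem pm_isDiag {n : ℕ} (σ : Equiv.Perm (Fin n)) (c : Fin n → ℂ) (hc : ∀ i, c i ≠ 0)
    (h : (permMat σ * Matrix.diagonal c).IsDiag) : permMat σ = 1 := by
  have : σ = 1 := by
    ext1 j
    by_contra hne
    have h1 : (permMat σ * Matrix.diagonal c) (σ j) j = 0 := h hne
    rw [Matrix.mul_diagonal] at h1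
    simp [permMat, hc j] at h1
  rw [this, pm_one]

theorem cyc_pm (n : ℕ) (hn : 0 < n) : ∃ σ : Equiv.Perm (Fin n), cycMat n = permMat σ ∧
    σ ^ n = 1 := by
  obtain ⟨m, rfl⟩ : ∃ m, n = m + 1 := ⟨n - 1, by omega⟩
  have hv : ∀ j : Fin (m + 1), ((Equiv.addRight (1 : Fin (m + 1)) j : Fin (m + 1)) : ℕ)
      = ((j : ℕ) + 1) % (m + 1) := by
    intro j
    simp [Fin.val_add]
  refine ⟨Equiv.addRight 1, ?_, ?_⟩
  · ext i j
    simp only [cycMat, permMat, Matrix.of_apply, Fin.ext_iff, hv]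
  · have hp : ∀ (k : ℕ) (j : Fin (m + 1)),
        ((((Equiv.addRight (1 : Fin (m + 1))) ^ k : Equiv.Perm (Fin (m + 1))) j : Fin (m + 1)) : ℕ)
        = ((j : ℕ) + k) % (m + 1) := by
      intro k j
      induction k with
      | zero => simp [Nat.mod_eq_of_lt j.2]
      | succ k ih =>
        rw [pow_succ', Equiv.Perm.mul_apply, hv, ih, Nat.mod_add_mod, add_assoc]
    ext j
    rw [hp]
    simp [Nat.mod_eq_of_lt j.2]

theorem sgn_ne {z : ℂ} (h : z = 1 ∨ z = -1) : z ≠ 0 := by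
  rcases h with h | h <;> simp [h]

theorem mem_diag {n : ℕ} (hn : 0 < n) {X : Mat n}
    (hX : X ∈ {M : Mat n | ∃ C ∈ cycSet n, ∃ J ∈ Jset (cycSet n), M = C * J})
    (hXd : X.IsDiag) : X ∈ Jset (cycSet n) := by
  obtain ⟨C, ⟨k, rfl⟩, J, hJ, rfl⟩ := hX
  obtain ⟨σ, hσ, -⟩ := cyc_pm n hn
  obtain ⟨d, hd, hJd⟩ := hJ.1
  have h1 : cycMat n ^ k = 1 := by
    rw [hσ, pm_pow]
    rw [hσ, pm_pow, hJd] at hXd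
    exact pm_isDiag _ d (fun i => sgn_ne (hd i)) hXd
  rw [h1, one_mul]; exact hJ

/-- Let `n` be odd and `𝒢 = 𝒞_n·J_n`. If `G ∈ 𝒢` is not diagonal and
`X, Y ∈ 𝒢` are diagonal with `det X = det Y`, then `(X - Y)·G` is nilpotent. -/
theorem stmt17 {n : ℕ} (hodd : Odd n)
    (G X Y : Mat n)
    (hG : G ∈ {M : Mat n | ∃ C ∈ cycSet n, ∃ J ∈ Jset (cycSet n), M = C * J})
    (hX : X ∈ {M : Mat n | ∃ C ∈ cycSet n, ∃ J ∈ Jset (cycSet n), M = C * J})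
    (hY : Y ∈ {M : Mat n | ∃ C ∈ cycSet n, ∃ J ∈ Jset (cycSet n), M = C * J})
    (hGnd : ¬ G.IsDiag) (hXd : X.IsDiag) (hYd : Y.IsDiag)
    (hdet : X.det = Y.det) :
    IsNilpotent ((X - Y) * G) := by
  have hn : 0 < n := hodd.pos
  have hX' := mem_diag hn hX hXd
  have hY' := mem_diag hn hY hYd
  obtain ⟨C, ⟨k, rfl⟩, J, hJ, rfl⟩ := hG
  obtain ⟨⟨x, hx, rfl⟩, hXa⟩ := hX'
  obtain ⟨⟨y, hy, rfl⟩, hYa⟩ := hY'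
  obtain ⟨⟨g, hg, rfl⟩, -⟩ := hJ
  obtain ⟨σ, hσ, hσn⟩ := cyc_pm n hn
  have hC1 : cycMat n ^ k ≠ 1 := by
    intro h
    apply hGnd
    rw [h, one_mul]
    exact Matrix.isDiag_diagonal g
  have hXa := hXa _ ⟨k, rfl⟩ hC1
  have hYa := hYa _ ⟨k, rfl⟩ hC1
  have hCp : cycMat n ^ k = permMat (σ ^ k) := by rw [hσ, pm_pow]
  have hm : Odd (orderOf (permMat (σ ^ k))) := by
    refine Odd.of_dvd_nat hodd (orderOf_dvd_of_pow_eq_one ?_)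
    rw [pm_pow, ← pow_mul, mul_comm, pow_mul, hσn, one_pow, pm_one]
  rw [hCp] at hXa hYa ⊢
  rw [avg_pm] at hXa hYa
  generalize orderOf (permMat (σ ^ k)) = m at hXa hYa hm
  generalize σ ^ k = τ at hXa hYa
  have hxy : ∀ j, ∏ k ∈ Finset.range m, x ((τ ^ k) j) = ∏ k ∈ Finset.range m, y ((τ ^ k) j) := by
    intro j
    rw [hdet, ← hYa] at hXa
    exact congrFun (Matrix.diagonal_injective hXa) j
  have hex : ∀ j, ∃ k ∈ Finset.range m, x ((τ ^ k) j) = y ((τ ^ k) j) := by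
    intro j
    by_contra! hne
    have h1 : ∏ k ∈ Finset.range m, x ((τ ^ k) j) = ∏ k ∈ Finset.range m, -y ((τ ^ k) j) := by
      refine Finset.prod_congr rfl fun k hk => ?_
      have h2 := hne k hk
      rcases hx ((τ ^ k) j) with h3 | h3 <;> rcases hy ((τ ^ k) j) with h4 | h4 <;>
        simp [h3, h4] at h2 ⊢
    rw [Finset.prod_neg, Finset.card_range, hm.neg_one_pow, hxy j] at h1
    have h5 : ∏ k ∈ Finset.range m, y ((τ ^ k) j) ≠ 0 :=
      Finset.prod_ne_zero_iff.2 fun k _ => sgn_ne (hy _)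
    apply h5
    linear_combination h1 / 2
  refine ⟨m, ?_⟩
  rw [Matrix.diagonal_sub, ← mul_assoc, diag_pm, mul_assoc, Matrix.diagonal_mul_diagonal,
    pm_diag_pow]
  refine (congrArg _ (Matrix.diagonal_eq_zero.2 ?_)).trans (Matrix.mul_zero _)
  funext j
  obtain ⟨k, hk, hkj⟩ := hex (τ j)
  refine Finset.prod_eq_zero hk ?_
  have h6 : τ ((τ ^ k) j) = (τ ^ k) (τ j) := by
    rw [← Equiv.Perm.mul_apply, ← Equiv.Perm.mul_apply, ← pow_succ, ← pow_succ']
  simp only [h6, hkj, sub_self, zero_mul]
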